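/- Let (A, t) be a C_k-algebra, let D₁ be a cyclic deductive system of A, and let a ∈ A. Then the smallest cyclic deductive system containing D₁ ∪ {a} equals {x ∈ A : there exists d ∈ D₁ such that d ∧ ⋀_{j=1}^{k} t^j(△a) ≤ x}. -/

import Mathlib

/-
Write `□a = ⋀_{j=1}^k t^j(△a)`. Every `△x` is complemented by `∼△x`, hence so is `□a`, and De Morgan
gives `a ⇁ b = ∼□a ∨ b`; therefore `z ≤ a ⇁ b ↔ z ∧ □a ≤ b`. Moreover `□` preserves meets, and since
`t^k = id` it is also deflationary and idempotent. By the adjunction, the cyclic deductive systems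
are exactly the lattice filters closed under `□`, and the filter generated by `D₁` and the `□`-fixed
element `□a` is closed under `□`.
-/

universe u

/-- Modal pseudocomplemented De Morgan algebra (mpM-algebra). -/
class MpM (A : Type u) extends DistribLattice A, BoundedOrder A where
  dm : A → A   -- De Morgan negation ∼
  ps : A → A   -- pseudocomplement *
  dm_dm : ∀ x : A, dm (dm x) = x
  dm_sup : ∀ x y : A, dm (x ⊔ y) = dm x ⊓ dm y
  pseudo : ∀ a x : A, a ⊓ x = ⊥ ↔ x ≤ ps a
  modal : ∀ x : A, x ⊔ dm x ≤ x ⊔ ps x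

open MpM

variable {A : Type u} [MpM A]

/-- ∇x = ∼(∼x ∧ x*) -/
def nabla (x : A) : A := dm (dm x ⊓ ps x)

/-- △x = ∼∇∼x -/
def tri (x : A) : A := dm (nabla (dm x))

/-- A C_k-algebra structure on an mpM-algebra `A`: an automorphism `t` with `t^k = id`. -/
structure CkStr (A : Type u) [MpM A] (k : ℕ) where
  t : A → A
  bij : Function.Bijective t
  map_inf : ∀ x y : A, t (x ⊓ y) = t x ⊓ t y
  map_sup : ∀ x y : A, t (x ⊔ y) = t x ⊔ t y
  map_dm : ∀ x : A, t (dm x) = dm (t x)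
  map_ps : ∀ x : A, t (ps x) = ps (t x)
  map_bot : t (⊥ : A) = ⊥
  map_top : t (⊤ : A) = ⊤
  periodic : ∀ x : A, t^[k] x = x

/-- Lattice filter: nonempty, upward closed, closed under binary meets. -/
def IsLatFilter (F : Set A) : Prop :=
  F.Nonempty ∧ (∀ x ∈ F, ∀ y : A, x ≤ y → y ∈ F) ∧ ∀ x ∈ F, ∀ y ∈ F, x ⊓ y ∈ F

/-- c-filter: a filter closed under △ and t. -/
def IsCFilter {k : ℕ} (T : CkStr A k) (F : Set A) : Prop :=
  IsLatFilter F ∧ ∀ x ∈ F, tri x ∈ F ∧ T.t x ∈ F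

/-- maximal c-filter: proper and not properly contained in a proper c-filter. -/
def IsMaxCFilter {k : ℕ} (T : CkStr A k) (N : Set A) : Prop :=
  IsCFilter T N ∧ N ≠ Set.univ ∧
    ∀ G : Set A, IsCFilter T G → G ≠ Set.univ → N ⊆ G → N = G

/-- prime filter -/
def IsPrimeFilter (P : Set A) : Prop :=
  IsLatFilter P ∧ P ≠ Set.univ ∧ ∀ x y : A, x ⊔ y ∈ P → x ∈ P ∨ y ∈ P

/-- ultrafilter: maximal proper (lattice) filter -/
def IsUltraFilter (U : Set A) : Prop :=
  IsLatFilter U ∧ U ≠ Set.univ ∧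
    ∀ G : Set A, IsLatFilter G → G ≠ Set.univ → U ⊆ G → U = G

/-- Birula–Rasiowa transformation φ(P) = A \ {∼x : x ∈ P}. -/
def brPhi (P : Set A) : Set A := Set.univ \ (dm '' P)

/-- a ⇁ b = (⋁_{i=1}^{k} ∇(∼ t^i(a))) ∨ b -/
def rimp {k : ℕ} (T : CkStr A k) (a b : A) : A :=
  ((Finset.Icc 1 k).sup fun i => nabla (dm (T.t^[i] a))) ⊔ b

/-- cyclic deductive system -/
def IsCDS {k : ℕ} (T : CkStr A k) (D : Set A) : Prop :=
  (⊤ : A) ∈ D ∧ ∀ x ∈ D, ∀ y : A, rimp T x y ∈ D → y ∈ D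

/-- maximal cyclic deductive system -/
def IsMaxCDS {k : ℕ} (T : CkStr A k) (M : Set A) : Prop :=
  IsCDS T M ∧ M ≠ Set.univ ∧
    ∀ G : Set A, IsCDS T G → G ≠ Set.univ → M ⊆ G → M = G

/-- the smallest cyclic deductive system containing `X` -/
def genCDS {k : ℕ} (T : CkStr A k) (X : Set A) : Set A :=
  ⋂₀ {D : Set A | IsCDS T D ∧ X ⊆ D}

/-- K(A) = {x : t(x) = x and ∇x = x} -/
def Kset {k : ℕ} (T : CkStr A k) : Set A := {x : A | T.t x = x ∧ nabla x = x}

/-- consistency operator ∘x = ⋀_{i=0}^{k} t^i((∼x ∨ x) ∧ (x ∧ ∼x)*) -/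
def cCirc {k : ℕ} (T : CkStr A k) (x : A) : A :=
  (Finset.Icc 0 k).inf fun i => T.t^[i] ((dm x ⊔ x) ⊓ ps (x ⊓ dm x))

/-- x → y = ∼((∼(x∨y))* ∧ (x∨y)) ∨ ((∼(x∧y))* ∧ (x∧y)) -/
def mpTo (x y : A) : A :=
  dm (ps (dm (x ⊔ y)) ⊓ (x ⊔ y)) ⊔ (ps (dm (x ⊓ y)) ⊓ (x ⊓ y))

/-- x ⇒ y = (x → y) ∧ (∼y → ∼x) -/
def mpIff (x y : A) : A := mpTo x y ⊓ mpTo (dm y) (dm x)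

namespace MpM

/-- De Morgan negation as an order isomorphism onto the order dual, through which lattice
homomorphism lemmas become the De Morgan laws. -/
def dmOrderIso : A ≃o Aᵒᵈ where
  toFun x := OrderDual.toDual (dm x)
  invFun x := dm (OrderDual.ofDual x)
  left_inv := dm_dm
  right_inv x := congrArg OrderDual.toDual (dm_dm (OrderDual.ofDual x))
  map_rel_iff' {x y} := by
    have dm_injective : Function.Injective (dm : A → A) := Function.Involutive.injective dm_dm
    change dm y ≤ dm x ↔ x ≤ y
    rw [← inf_eq_right, ← dm_sup, dm_injective.eq_iff, sup_eq_right]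

theorem dm_antitone : Antitone (dm : A → A) := fun _ _ h => dmOrderIso.monotone h

theorem dm_bot : dm (⊥ : A) = ⊤ := (dmOrderIso (A := A)).map_bot

theorem dm_inf (x y : A) : dm (x ⊓ y) = dm x ⊔ dm y := dmOrderIso.map_inf x y

theorem dm_finset_inf {ι : Type*} (s : Finset ι) (f : ι → A) :
    dm (s.inf f) = s.sup fun i => dm (f i) :=
  map_finset_inf dmOrderIso s f

theorem le_ps_iff_disjoint {x y : A} : x ≤ ps y ↔ Disjoint y x := by
  rw [disjoint_iff, pseudo]

theorem disjoint_ps (x : A) : Disjoint x (ps x) := le_ps_iff_disjoint.1 le_rfl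

theorem ps_sup (x y : A) : ps (x ⊔ y) = ps x ⊓ ps y :=
  eq_of_forall_le_iff fun z => by
    simp only [le_inf_iff, le_ps_iff_disjoint, disjoint_sup_left]

theorem isCompl_dm_of_disjoint {x : A} (h : Disjoint x (dm x)) : IsCompl x (dm x) := by
  refine ⟨h, codisjoint_iff.2 ?_⟩
  rw [sup_comm, ← dm_bot, ← h.eq_bot, dm_inf, dm_dm]

theorem isCompl_dm_finset_inf {ι : Type*} {s : Finset ι} {f : ι → A}
    (h : ∀ i ∈ s, IsCompl (f i) (dm (f i))) : IsCompl (s.inf f) (dm (s.inf f)) := by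
  apply isCompl_dm_of_disjoint
  rw [dm_finset_inf, Finset.disjoint_sup_right]
  exact fun i hi => (h i hi).disjoint.mono_left (Finset.inf_le hi)

end MpM

theorem nabla_dm (x : A) : nabla (dm x) = dm (tri x) := (dm_dm _).symm

theorem tri_eq_inf_ps_dm (x : A) : tri x = x ⊓ ps (dm x) := by
  rw [tri, nabla, dm_dm, dm_dm]

theorem tri_le (x : A) : tri x ≤ x := by
  rw [tri_eq_inf_ps_dm]
  exact inf_le_left

theorem tri_inf (x y : A) : tri (x ⊓ y) = tri x ⊓ tri y := by
  simp only [tri_eq_inf_ps_dm, dm_inf, ps_sup, inf_inf_inf_comm]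

theorem isCompl_tri_dm (x : A) : IsCompl (tri x) (dm (tri x)) := by
  have modal_dual : x ⊓ dm (ps (dm x)) ≤ dm x := by
    have h := dm_antitone (modal (dm x))
    rw [dm_sup, dm_sup, dm_dm] at h
    exact h.trans inf_le_right
  apply isCompl_dm_of_disjoint
  rw [tri_eq_inf_ps_dm, dm_inf, disjoint_sup_right]
  constructor
  · exact (disjoint_ps (dm x)).symm.mono_left inf_le_right
  · rw [disjoint_right_comm]
    exact (disjoint_ps (dm x)).mono_left modal_dual

theorem tri_eq_self {x : A} (h : Disjoint x (dm x)) : tri x = x := by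
  rw [tri_eq_inf_ps_dm, inf_eq_left, le_ps_iff_disjoint]
  exact h.symm

namespace CkStr

variable {k : ℕ} (T : CkStr A k)

theorem iterate_inf (i : ℕ) (x y : A) : T.t^[i] (x ⊓ y) = T.t^[i] x ⊓ T.t^[i] y :=
  Function.Semiconj₂.iterate T.map_inf i x y

theorem iterate_finset_inf {ι : Type*} (i : ℕ) (s : Finset ι) (f : ι → A) :
    T.t^[i] (s.inf f) = s.inf fun j => T.t^[i] (f j) :=
  Finset.apply_inf_eq_inf_comp _ (T.iterate_inf i) (Function.iterate_fixed T.map_top i)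

theorem iterate_tri (i : ℕ) (x : A) : T.t^[i] (tri x) = tri (T.t^[i] x) := by
  have t_tri : Function.Commute T.t tri := fun x => by
    simp only [tri_eq_inf_ps_dm, T.map_inf, T.map_ps, T.map_dm]
  exact t_tri.iterate_left i x

/-- The operator `□a = ⋀_{j=1}^k t^j(△a)`, which turns `⇁` into `a ⇁ b = ∼□a ∨ b`. -/
def box (a : A) : A := (Finset.Icc 1 k).inf fun j => T.t^[j] (tri a)

theorem isCompl_box_dm (a : A) : IsCompl (T.box a) (dm (T.box a)) :=
  isCompl_dm_finset_inf fun i _ => by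
    rw [T.iterate_tri]
    exact isCompl_tri_dm _

theorem box_inf (a b : A) : T.box (a ⊓ b) = T.box a ⊓ T.box b := by
  simp only [box, tri_inf, iterate_inf, ← Finset.inf_inf, Pi.inf_def]

theorem box_mono : Monotone T.box := fun a b h => by
  rw [← inf_eq_left, ← T.box_inf, inf_eq_left.2 h]

theorem box_le_iterate_tri (hk : 0 < k) (a : A) (n : ℕ) : T.box a ≤ T.t^[n] (tri a) := by
  obtain ⟨j, hj, hnj⟩ : ∃ j ∈ Finset.Icc 1 k, T.t^[j] (tri a) = T.t^[n] (tri a) := by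
    have periodic : Function.IsPeriodicPt T.t k (tri a) := T.periodic (tri a)
    rcases Nat.eq_zero_or_pos (n % k) with h | h
    · refine ⟨k, Finset.right_mem_Icc.2 hk, ?_⟩
      rw [T.periodic, ← periodic.iterate_mod_apply n, h, Function.iterate_zero_apply]
    · exact ⟨n % k, Finset.mem_Icc.2 ⟨h, (Nat.mod_lt n hk).le⟩, periodic.iterate_mod_apply n⟩
  exact (Finset.inf_le hj).trans_eq hnj

theorem box_le (hk : 0 < k) (a : A) : T.box a ≤ a :=
  (T.box_le_iterate_tri hk a 0).trans (tri_le a)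

theorem box_box (hk : 0 < k) (a : A) : T.box (T.box a) = T.box a := by
  refine (T.box_le hk _).antisymm (Finset.le_inf fun i _ => ?_)
  rw [tri_eq_self (T.isCompl_box_dm a).disjoint]
  conv_rhs => rw [box, iterate_finset_inf]
  refine Finset.le_inf fun j _ => ?_
  rw [← Function.iterate_add_apply]
  exact T.box_le_iterate_tri hk a (i + j)

end CkStr

section CyclicDeductiveSystem

variable {k : ℕ} {T : CkStr A k}

theorem rimp_eq_dm_box_sup (a b : A) : rimp T a b = dm (T.box a) ⊔ b := by
  simp only [rimp, CkStr.box, dm_finset_inf, nabla_dm, CkStr.iterate_tri]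

theorem le_rimp_iff {a b c : A} : c ≤ rimp T a b ↔ c ⊓ T.box a ≤ b := by
  rw [rimp_eq_dm_box_sup, sup_comm]
  exact (T.isCompl_box_dm a).le_sup_right_iff_inf_left_le

theorem rimp_eq_top_iff {a b : A} : rimp T a b = ⊤ ↔ T.box a ≤ b := by
  rw [← top_le_iff, le_rimp_iff, top_inf_eq]

theorem IsCDS.mem_of_box_le {D : Set A} (hD : IsCDS T D) {x y : A} (hx : x ∈ D)
    (hxy : T.box x ≤ y) : y ∈ D :=
  hD.2 x hx y (rimp_eq_top_iff.2 hxy ▸ hD.1)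

theorem IsCDS.isLatFilter (hk : 0 < k) {D : Set A} (hD : IsCDS T D) : IsLatFilter D := by
  have up : ∀ x ∈ D, ∀ y, x ≤ y → y ∈ D := fun x hx y hxy =>
    hD.mem_of_box_le hx ((T.box_le hk x).trans hxy)
  refine ⟨⟨⊤, hD.1⟩, up, fun x hx y hy => ?_⟩
  have hle : y ≤ rimp T x (x ⊓ y) :=
    le_rimp_iff.2 (le_inf (inf_le_right.trans (T.box_le hk x)) inf_le_left)
  exact hD.2 x hx _ (up y hy _ hle)

theorem IsLatFilter.top_mem {F : Set A} (hF : IsLatFilter F) : ⊤ ∈ F :=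
  let ⟨x, hx⟩ := hF.1
  hF.2.1 x hx ⊤ le_top

theorem isCDS_iff (hk : 0 < k) {D : Set A} :
    IsCDS T D ↔ IsLatFilter D ∧ ∀ x ∈ D, T.box x ∈ D := by
  constructor
  · exact fun hD => ⟨hD.isLatFilter hk, fun x hx => hD.mem_of_box_le hx le_rfl⟩
  · rintro ⟨hD, box_mem⟩
    refine ⟨hD.top_mem, fun x hx y hxy => ?_⟩
    exact hD.2.1 _ (hD.2.2 _ hxy _ (box_mem x hx)) y (le_rimp_iff.1 le_rfl)

theorem IsLatFilter.setOf_inf_le {F : Set A} (hF : IsLatFilter F) (c : A) :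
    IsLatFilter {x : A | ∃ d ∈ F, d ⊓ c ≤ x} := by
  refine ⟨⟨⊤, ⊤, hF.top_mem, le_top⟩, ?_, ?_⟩
  · rintro x ⟨d, hd, hdx⟩ y hxy
    exact ⟨d, hd, hdx.trans hxy⟩
  · rintro x ⟨d, hd, hdx⟩ y ⟨e, he, hey⟩
    refine ⟨d ⊓ e, hF.2.2 d hd e he, ?_⟩
    rw [inf_inf_distrib_right]
    exact inf_le_inf hdx hey

theorem IsCDS.setOf_inf_le (hk : 0 < k) {D : Set A} (hD : IsCDS T D) {c : A}
    (hc : T.box c = c) : IsCDS T {x : A | ∃ d ∈ D, d ⊓ c ≤ x} := by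
  rw [isCDS_iff hk] at hD ⊢
  refine ⟨hD.1.setOf_inf_le c, ?_⟩
  rintro x ⟨d, hd, hdx⟩
  refine ⟨T.box d, hD.2 d hd, ?_⟩
  calc T.box d ⊓ c = T.box (d ⊓ c) := by rw [T.box_inf, hc]
    _ ≤ T.box x := T.box_mono hdx

end CyclicDeductiveSystem

theorem stmt11 {k : ℕ} (hk : 0 < k) (T : CkStr A k) (D₁ : Set A)
    (hD₁ : IsCDS T D₁) (a : A) :
    genCDS T (D₁ ∪ {a}) =
      {x : A | ∃ d ∈ D₁, d ⊓ ((Finset.Icc 1 k).inf fun j => T.t^[j] (tri a)) ≤ x} := by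
  have hF := hD₁.setOf_inf_le hk (T.box_box hk a)
  apply Set.Subset.antisymm
  · refine Set.sInter_subset_of_mem ⟨hF, Set.union_subset ?_ (Set.singleton_subset_iff.2 ?_)⟩
    · exact fun d hd => ⟨d, hd, inf_le_left⟩
    · exact ⟨⊤, hD₁.1, inf_le_right.trans (T.box_le hk a)⟩
  · rintro x ⟨d, hd, hdx⟩ D ⟨hD, hsub⟩
    obtain ⟨⟨-, up, inf_mem⟩, box_mem⟩ := (isCDS_iff hk).1 hD
    exact up _ (inf_mem d (hsub (Or.inl hd)) _ (box_mem a (hsub (Or.inr rfl)))) x hdx
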